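/- Let r ≥ 1. Suppose x ∈ ℝ⁺ and P is a finite collection of bitiles with x ∈ I_P for each P ∈ P, and P = ⋃_{T∈T} T where T is either a collection of u-overlapping trees which are td-maximal among u-overlapping trees contained in P, or a properly-sorted collection of l-overlapping trees. Then for any collection of real coefficients {c_P}_{P∈P}, sup_{k∈ℤ} ‖ Σ_{P∈P, |I_P|<2^k} c_P 1_{ω_{P_u}}(ξ) ‖_{V^r_ξ} ≤ C |T|^{1/r} · sup_{T∈T} ‖ Σ_{P∈T} c_P 1_{ω_{P_u}} ‖_{V^r}. -/

import Mathlib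

open MeasureTheory Set Filter
open scoped ENNReal NNReal Classical BigOperators RealInnerProductSpace

noncomputable section

/-- The binary digit of `x` in position `n+1` to the left of the point
(terminating expansion for dyadic rationals). -/
def digit (n : ℤ) (x : ℝ) : ℤ := ⌊x / 2 ^ n⌋ % 2

/-- Bitwise addition `⊕` on nonnegative reals. -/
def wXor (x y : ℝ) : ℝ := ∑' n : ℤ, (((digit n x + digit n y) % 2 : ℤ) : ℝ) * 2 ^ n

/-- The `n`-th digit of the bitwise product `x ⊗ y`. -/
def wMulDigit (n : ℤ) (x y : ℝ) : ℤ :=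
  ⌊∑' m : ℤ, ((digit (n - m) x * digit m y : ℤ) : ℝ)⌋ % 2

/-- Bitwise multiplication `⊗` on nonnegative reals. -/
def wMul (x y : ℝ) : ℝ := ∑' n : ℤ, ((wMulDigit n x y : ℤ) : ℝ) * 2 ^ n

/-- The Walsh character `e(x) = exp (i π d₋₁(x))`. -/
def walshe (x : ℝ) : ℝ := (-1 : ℝ) ^ (digit (-1) x)

/-- The Walsh–Fourier transform on `ℝ⁺`; it is involutive, so it also serves
as the inverse Walsh–Fourier transform `ˇ`. -/
def walshFT (f : ℝ → ℝ) (ξ : ℝ) : ℝ := ∫ x in Set.Ici (0 : ℝ), walshe (wMul ξ x) * f x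

/-- Lebesgue measure on `ℝ⁺`. -/
def μplus : Measure ℝ := volume.restrict (Set.Ici 0)

/-- `L^p` norm (real exponent `p`) of an `ℝ≥0∞`-valued function. -/
def lpNormE (p : ℝ) (μ : Measure ℝ) (F : ℝ → ℝ≥0∞) : ℝ≥0∞ := (∫⁻ x, F x ^ p ∂μ) ^ (1 / p)

/-- The `r`-variation norm of `m` on the domain `D`. -/
def vnorm {ι E : Type*} [LinearOrder ι] [NormedAddCommGroup E] (r : ℝ) (D : Set ι)
    (m : ι → E) : ℝ≥0∞ :=
  (⨆ ξ ∈ D, (‖m ξ‖₊ : ℝ≥0∞)) +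
    ⨆ (N : ℕ) (u : Fin (N + 1) → ι) (_ : StrictMono u) (_ : ∀ i, u i ∈ D),
      (∑ i : Fin N, (‖m (u i.succ) - m (u i.castSucc)‖₊ : ℝ≥0∞) ^ r) ^ (1 / r)

/-- The Walsh `L^q`-multiplier norm. -/
def Mq (q : ℝ) (m : ℝ → ℝ) : ℝ≥0∞ :=
  ⨆ (g : ℝ → ℝ) (_ : eLpNorm g (ENNReal.ofReal q) μplus = 1),
    eLpNorm (walshFT fun ξ => m ξ * walshFT g ξ) (ENNReal.ofReal q) μplus

/-- The Walsh `L^q`-maximal-multiplier norm of a sequence of multipliers. -/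
def Mqstar (q : ℝ) (m : ℤ → ℝ → ℝ) : ℝ≥0∞ :=
  ⨆ (g : ℝ → ℝ) (_ : eLpNorm g (ENNReal.ofReal q) μplus = 1),
    lpNormE q μplus fun x => ⨆ k : ℤ, (‖walshFT (fun ξ => m k ξ * walshFT g ξ) x‖₊ : ℝ≥0∞)

/-- The `s`-variation `L^q`-multiplier norm of a sequence of multipliers. -/
def Mqs (q s : ℝ) (m : ℤ → ℝ → ℝ) : ℝ≥0∞ :=
  ⨆ (g : ℝ → ℝ) (_ : eLpNorm g (ENNReal.ofReal q) μplus = 1),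
    lpNormE q μplus fun x =>
      vnorm s (Set.univ : Set ℤ) fun k => walshFT (fun ξ => m k ξ * walshFT g ξ) x

/-- Dyadic intervals `[n 2^k, (n+1) 2^k)`. -/
def IsDyadic (I : Set ℝ) : Prop :=
  ∃ n k : ℤ, I = Set.Ico ((n : ℝ) * 2 ^ k) (((n : ℝ) + 1) * 2 ^ k)

/-- Dyadic intervals of length `2^k`. -/
def IsDyadicLen (k : ℤ) (ω : Set ℝ) : Prop :=
  ∃ n : ℤ, ω = Set.Ico ((n : ℝ) * 2 ^ k) (((n : ℝ) + 1) * 2 ^ k)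

/-- The lower half of an interval. -/
def lowerHalf (ω : Set ℝ) : Set ℝ := ω ∩ Set.Iio ((sInf ω + sSup ω) / 2)

/-- The upper half of an interval. -/
def upperHalf (ω : Set ℝ) : Set ℝ := ω ∩ Set.Ici ((sInf ω + sSup ω) / 2)

/-- A bitile `I × ω ⊆ ℝ⁺ × ℝ⁺` : a rectangle of dyadic intervals of area `2`. -/
structure Bitile where
  I : Set ℝ
  ω : Set ℝ
  hI : IsDyadic I
  hω : IsDyadic ω
  hIsub : I ⊆ Set.Ici 0
  hωsub : ω ⊆ Set.Ici 0
  harea : volume I * volume ω = 2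

/-- The `L²`-normalized Walsh wave packet of the tile `I × ω`. -/
def wavePacket (I ω : Set ℝ) (x : ℝ) : ℝ :=
  Real.sqrt (volume I).toReal * walshFT (Set.indicator ω fun _ => (1 : ℝ)) (wXor x (sInf I))

/-- `⟨f, φ_{P_l}⟩`, the pairing of `f` with the wave packet of the lower tile of `P`. -/
def walshCoef (P : Bitile) (f : ℝ → ℝ) : ℝ :=
  ∫ y in Set.Ici (0 : ℝ), f y * wavePacket P.I (lowerHalf P.ω) y

/-- The partial order on bitiles. -/
def Bitile.le (P Q : Bitile) : Prop := P.I ⊆ Q.I ∧ Q.ω ⊆ P.ω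

/-- Convexity of a set of bitiles. -/
def ConvexBitiles (S : Set Bitile) : Prop :=
  ∀ P₁ P₂ P₃ : Bitile, P₁ ∈ S → P₃ ∈ S → Bitile.le P₁ P₂ → Bitile.le P₂ P₃ → P₂ ∈ S

/-- The truncated partial Walsh-sum operator attached to a collection `Ps` of bitiles. -/
def Sk (Ps : Set Bitile) (f : ℝ → ℝ) (k : ℤ) (ξ x : ℝ) : ℝ :=
  ∑ᶠ (P : Bitile) (_ : P ∈ Ps ∧ volume P.I < 2 ^ k),
    walshCoef P f * wavePacket P.I (lowerHalf P.ω) x *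
      Set.indicator (upperHalf P.ω) (fun _ => (1 : ℝ)) ξ

/-- The partial Walsh-sum operator `S[f](ξ,x) = (f̂ 1_{[0,ξ)})ˇ(x)`. -/
def Spartial (f : ℝ → ℝ) (ξ x : ℝ) : ℝ :=
  walshFT (fun η => Set.indicator (Set.Ico 0 ξ) (fun _ => (1 : ℝ)) η * walshFT f η) x

/-- A tree of bitiles with top data `(ξtop, Itop)`. -/
structure WTree where
  carrier : Set Bitile
  ξtop : ℝ
  Itop : Set ℝ

/-- The defining conditions of a tree. -/
def IsTree (T : WTree) : Prop :=
  IsDyadic T.Itop ∧ 0 ≤ T.ξtop ∧ ∀ P ∈ T.carrier, P.I ⊆ T.Itop ∧ T.ξtop ∈ P.ω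

/-- `u`-overlapping trees. -/
def UOverlapping (T : WTree) : Prop := ∀ P ∈ T.carrier, T.ξtop ∈ upperHalf P.ω

/-- `l`-overlapping trees. -/
def LOverlapping (T : WTree) : Prop := ∀ P ∈ T.carrier, T.ξtop ∈ lowerHalf P.ω

/-- `T` is td-maximal among the trees in `Cc` : maximal with respect to inclusion among
trees in `Cc` with the same top data. -/
def TdMaximalAmong (T : WTree) (Cc : Set WTree) : Prop :=
  T ∈ Cc ∧ ∀ T' ∈ Cc, T'.ξtop = T.ξtop → T'.Itop = T.Itop →
    T.carrier ⊆ T'.carrier → T'.carrier ⊆ T.carrier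

/-- Order on the lower tiles of two bitiles. -/
def lowerLE (P Q : Bitile) : Prop := P.I ⊆ Q.I ∧ lowerHalf Q.ω ⊆ lowerHalf P.ω

/-- Strict order on the lower tiles of two bitiles. -/
def lowerLT (P Q : Bitile) : Prop := lowerLE P Q ∧ ¬ lowerLE Q P

/-- `l`-convexity of a set of bitiles. -/
def LConvex (S : Set Bitile) : Prop :=
  ∀ P P' P'' : Bitile, P ∈ S → P'' ∈ S → lowerLT P P' → lowerLT P' P'' → P' ∈ S

/-- A properly-sorted collection of `l`-overlapping trees. -/
def ProperlySorted (Ts : Set WTree) : Prop :=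
  (∀ T ∈ Ts, IsTree T ∧ LOverlapping T ∧ LConvex T.carrier) ∧
  (∀ T ∈ Ts, ∀ T' ∈ Ts, T ≠ T' → T.carrier ∩ T'.carrier = ∅) ∧
  (∀ T ∈ Ts, ∀ P ∈ T.carrier, ∀ T' ∈ Ts, (T'.Itop ∩ P.I).Nonempty → T'.ξtop ∉ upperHalf P.ω)

/-- The multiplier `𝒟_k = Σ_{|ω| = 2^k, ω ∩ Ξ ≠ ∅} a_ω 1_ω`. -/
def Dk (a : Set ℝ → ℝ) (Ξ : Set ℝ) (k : ℤ) (ξ : ℝ) : ℝ :=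
  ∑ᶠ (ω : Set ℝ) (_ : IsDyadicLen k ω ∧ (ω ∩ Ξ).Nonempty),
    a ω * Set.indicator ω (fun _ => (1 : ℝ)) ξ

/-- The sequence `k ↦ Σ_{|ω| = 2^k} a_ω 1_ω(ξ)`. -/
def dyadicSum (a : Set ℝ → ℝ) (ξ : ℝ) (k : ℤ) : ℝ :=
  ∑ᶠ (ω : Set ℝ) (_ : IsDyadicLen k ω), a ω * Set.indicator ω (fun _ => (1 : ℝ)) ξ

/-- A tile `I × ω ⊆ ℝ⁺ × ℝ⁺` : a rectangle of dyadic intervals of area `1`. -/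
structure WTile where
  I : Set ℝ
  ω : Set ℝ
  hI : IsDyadic I
  hω : IsDyadic ω
  hIsub : I ⊆ Set.Ici 0
  hωsub : ω ⊆ Set.Ici 0
  harea : volume I * volume ω = 1

/-- The subset of the phase plane occupied by a tile. -/
def WTile.carrier (p : WTile) : Set (ℝ × ℝ) := p.I ×ˢ p.ω

/-- The phase-plane projection `Π_S` associated to a region `S` which can be written as a
finite disjoint union of tiles (it is independent of the chosen tiling). -/
def phaseProj (S : Set (ℝ × ℝ)) (f : ℝ → ℝ) : ℝ → ℝ :=
  if h : ∃ ps : Set WTile, ps.Finite ∧ ps.PairwiseDisjoint WTile.carrier ∧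
      (⋃ p ∈ ps, p.carrier) = S then
    fun x => ∑ᶠ p ∈ h.choose,
      (∫ y in Set.Ici (0 : ℝ), f y * wavePacket p.I p.ω y) * wavePacket p.I p.ω x
  else 0

/-- The region of the phase plane occupied by a tree. -/
def treeRegion (T : WTree) : Set (ℝ × ℝ) := ⋃ P ∈ T.carrier, P.I ×ˢ P.ω

/-- `size(Ps, f) = sup_{T ⊆ Ps convex tree} |I_T|^{-1/2} ‖Π_T f‖_{L²}`. -/
def size (Ps : Set Bitile) (f : ℝ → ℝ) : ℝ≥0∞ :=
  ⨆ (T : WTree) (_ : IsTree T ∧ ConvexBitiles T.carrier ∧ T.carrier ⊆ Ps),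
    (volume T.Itop ^ (1 / 2 : ℝ))⁻¹ * eLpNorm (phaseProj (treeRegion T) f) 2 μplus


/-!
Over a fixed spatial point, the bitiles active at a frequency `ξ` (those with `ξ ∈ ω_{P_u}`) all
lie in a single tree of the stack. Along an increasing sequence of frequencies, the steps whose two
endpoints are served by a common tree are steps of the multiplier of that tree, so each tree
contributes at most the `r`-th power of the supremum `S` over the trees. Every other step costs
at most `2 S`, and there are at most `2 |T|` of them. In the `u`-overlapping case such a step leaves
the upper half of a bitile `P` and is charged to the tree with the largest top frequency in that
half; the dyadic structure lets a tree be charged only once. In the `l`-overlapping case only one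
bitile is active at a time, and such a step either jumps over the top frequency of a tree or, by
`l`-convexity, leaves a tree for good. This gives the inequality without truncation, with constant
`6 = 2 (1 + 2)`.

Truncating every tree preserves the properties of the stack on which this count rests. It also
decreases the variation of each tree: the frequency intervals of a tree are nested around its top
frequency, so removing the bitiles with long spatial intervals amounts to composing the multiplier
of the tree with a monotone map which collapses a dyadic interval to its left endpoint.
-/
section Variation

variable {ι κ E : Type*} [LinearOrder ι] [LinearOrder κ] [NormedAddCommGroup E]
variable {r : ℝ} {D : Set ι} {m : ι → E}

lemma enorm_le_vnorm {ξ : ι} (hξ : ξ ∈ D) : ‖m ξ‖ₑ ≤ vnorm r D m :=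
  (le_iSup₂ (f := fun ξ (_ : ξ ∈ D) => ‖m ξ‖ₑ) ξ hξ).trans le_self_add

lemma vnorm_zero (hr : 0 < r) : vnorm r D (0 : ι → E) = 0 := by
  simp [vnorm, hr]

lemma sum_enorm_sub_rpow_le_vnorm_rpow (hr : 0 < r) {N : ℕ} {u : Fin (N + 1) → ι}
    (hu : StrictMono u) (huD : ∀ i, u i ∈ D) :
    ∑ i : Fin N, ‖m (u i.succ) - m (u i.castSucc)‖ₑ ^ r ≤ vnorm r D m ^ r := by
  rw [← ENNReal.rpow_inv_le_iff hr, ← one_div]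
  refine le_trans ?_ le_add_self
  exact le_iSup₂_of_le N u (le_iSup₂_of_le hu huD le_rfl)

/-- The sequence `w` is `u` with its repetitions deleted. -/
lemma exists_strictMono_sum_consecutive_eq {M : Type*} [AddCommMonoid M] {g : ι → ι → M}
    (hg : ∀ a, g a a = 0) {N : ℕ} {u : Fin (N + 1) → ι} (hu : Monotone u) :
    ∃ (N' : ℕ) (w : Fin (N' + 1) → ι), StrictMono w ∧ w 0 = u 0 ∧ range w ⊆ range u ∧
      ∑ i : Fin N', g (w i.succ) (w i.castSucc) = ∑ i : Fin N, g (u i.succ) (u i.castSucc) := by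
  induction N with
  | zero => exact ⟨0, u, fun a b h => absurd h (by omega), rfl, subset_rfl, rfl⟩
  | succ N ih =>
    obtain ⟨N', w, hw, hw0, hwu, hsum⟩ := ih (hu.comp Fin.strictMono_succ.monotone)
    have hwu' : range w ⊆ range u := hwu.trans (range_comp_subset_range _ _)
    have hsplit : ∑ i : Fin (N + 1), g (u i.succ) (u i.castSucc) =
        g (w 0) (u 0) + ∑ i : Fin N', g (w i.succ) (w i.castSucc) := by
      rw [Fin.sum_univ_succ, hsum, hw0]
      rfl
    rcases (hu (Fin.zero_le (Fin.succ 0))).eq_or_lt with h | h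
    · exact ⟨N', w, hw, hw0.trans h.symm, hwu', by rw [hsplit, hw0.trans h.symm, hg, zero_add]⟩
    · refine ⟨N' + 1, Matrix.vecCons (u 0) w, strictMono_vecCons.2 ⟨h.trans_eq hw0.symm, hw⟩,
        rfl, ?_, ?_⟩
      · rw [Matrix.range_cons]
        exact union_subset (singleton_subset_iff.2 (mem_range_self 0)) hwu'
      · rw [hsplit, Fin.sum_univ_succ]
        rfl

lemma vnorm_comp_le (hr : 0 < r) {D' : Set κ} {φ : κ → ι} (hφ : MonotoneOn φ D')
    (hφD : MapsTo φ D' D) : vnorm r D' (m ∘ φ) ≤ vnorm r D m := by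
  unfold vnorm
  refine add_le_add (iSup₂_le fun ξ hξ => le_iSup₂_of_le (φ ξ) (hφD hξ) le_rfl) ?_
  refine iSup₂_le fun N u => iSup₂_le fun hu huD => ?_
  obtain ⟨N', w, hw, -, hwu, hsum⟩ := exists_strictMono_sum_consecutive_eq
    (g := fun a b => ‖m a - m b‖ₑ ^ r) (fun a => by simp [hr])
    (u := φ ∘ u) fun i j hij => hφ (huD i) (huD j) (hu.monotone hij)
  have hwD : ∀ i, w i ∈ D := fun i => by
    obtain ⟨j, hj⟩ := hwu (mem_range_self i)
    exact hj ▸ hφD (huD j)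
  exact le_iSup₂_of_le N' w <| le_iSup₂_of_le hw hwD <|
    ENNReal.rpow_le_rpow hsum.ge (by positivity)

section Patching

variable {τ : Type*} {Ts : Finset τ} {F : ι → E} {G : τ → ι → E} {S : ℝ≥0∞}

lemma sum_enorm_sub_rpow_le_card_mul (hr : 0 < r) (hG : ∀ T ∈ Ts, vnorm r D (G T) ≤ S)
    {N : ℕ} {u : Fin (N + 1) → ι} (hu : StrictMono u) (huD : ∀ i, u i ∈ D) {A : Finset (Fin N)}
    (hA : ∀ i ∈ A, ∃ T ∈ Ts, F (u i.castSucc) = G T (u i.castSucc) ∧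
      F (u i.succ) = G T (u i.succ)) :
    ∑ i ∈ A, ‖F (u i.succ) - F (u i.castSucc)‖ₑ ^ r ≤ Ts.card * S ^ r :=
  calc
    ∑ i ∈ A, ‖F (u i.succ) - F (u i.castSucc)‖ₑ ^ r
    _ ≤ ∑ i ∈ A, ∑ T ∈ Ts, ‖G T (u i.succ) - G T (u i.castSucc)‖ₑ ^ r := by
      refine Finset.sum_le_sum fun i hi => ?_
      obtain ⟨T, hT, h₀, h₁⟩ := hA i hi
      rw [h₀, h₁]
      exact Finset.single_le_sum (f := fun T => ‖G T (u i.succ) - G T (u i.castSucc)‖ₑ ^ r)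
        (fun _ _ => zero_le) hT
    _ = ∑ T ∈ Ts, ∑ i ∈ A, ‖G T (u i.succ) - G T (u i.castSucc)‖ₑ ^ r := Finset.sum_comm
    _ ≤ ∑ _ ∈ Ts, S ^ r := by
      refine Finset.sum_le_sum fun T hT => ?_
      exact (Finset.sum_le_univ_sum_of_nonneg fun _ => zero_le).trans <|
        (sum_enorm_sub_rpow_le_vnorm_rpow hr hu huD).trans (ENNReal.rpow_le_rpow (hG T hT) hr.le)
    _ = Ts.card * S ^ r := by rw [Finset.sum_const, nsmul_eq_mul]

lemma sum_enorm_sub_rpow_le_card_mul_of_enorm_le {α : Type*} {A : Finset α} {f g : α → E}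
    (hr : 0 ≤ r) (hf : ∀ i ∈ A, ‖f i‖ₑ ≤ S) (hg : ∀ i ∈ A, ‖g i‖ₑ ≤ S) :
    ∑ i ∈ A, ‖f i - g i‖ₑ ^ r ≤ A.card * (2 * S) ^ r := by
  rw [← nsmul_eq_mul]
  refine Finset.sum_le_card_nsmul _ _ _ fun i hi => ENNReal.rpow_le_rpow ?_ hr
  calc ‖f i - g i‖ₑ
    _ ≤ ‖f i‖ₑ + ‖g i‖ₑ := enorm_sub_le
    _ ≤ S + S := add_le_add (hf i hi) (hg i hi)
    _ = 2 * S := (two_mul S).symm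

lemma vnorm_le_of_patches (hr : 1 ≤ r) {b : ℕ} {R : ι → ι → Prop}
    (hG : ∀ T ∈ Ts, vnorm r D (G T) ≤ S) (hpt : ∀ ξ ∈ D, ∃ T ∈ Ts, F ξ = G T ξ)
    (hR : ∀ ξ η, R ξ η → ∃ T ∈ Ts, F ξ = G T ξ ∧ F η = G T η)
    (hstep : ∀ (N : ℕ) (u : Fin (N + 1) → ι), StrictMono u →
      (Finset.univ.filter fun i : Fin N => ¬ R (u i.castSucc) (u i.succ)).card ≤ b) :
    vnorm r D F ≤ 2 * ((Ts.card : ℝ≥0∞) ^ (1 / r) + (b : ℝ≥0∞) ^ (1 / r)) * S := by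
  have hr0 : 0 < r := by linarith
  set n := (Ts.card : ℝ≥0∞)
  have hroot (a s : ℝ≥0∞) : (a * s ^ r) ^ (1 / r) = a ^ (1 / r) * s := by
    rw [one_div, ENNReal.mul_rpow_of_nonneg _ _ (by positivity), ENNReal.rpow_rpow_inv hr0.ne']
  have hF : ∀ ξ ∈ D, ‖F ξ‖ₑ ≤ S := fun ξ hξ => by
    obtain ⟨T, hT, h⟩ := hpt ξ hξ
    exact h ▸ (enorm_le_vnorm hξ).trans (hG T hT)
  have hsup : ⨆ ξ ∈ D, ‖F ξ‖ₑ ≤ n ^ (1 / r) * S := iSup₂_le fun ξ hξ => by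
    obtain ⟨T, hT, -⟩ := hpt ξ hξ
    have hn : 1 ≤ n := Nat.one_le_cast.2 (Finset.card_pos.2 ⟨T, hT⟩)
    exact (hF ξ hξ).trans (le_mul_of_one_le_left' (ENNReal.one_le_rpow hn (by positivity)))
  have hvar : ∀ (N : ℕ) (u : Fin (N + 1) → ι), StrictMono u → (∀ i, u i ∈ D) →
      (∑ i : Fin N, ‖F (u i.succ) - F (u i.castSucc)‖ₑ ^ r) ^ (1 / r) ≤
        n ^ (1 / r) * S + (b : ℝ≥0∞) ^ (1 / r) * (2 * S) := fun N u hu huD => by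
    rw [← hroot, ← hroot]
    refine (ENNReal.rpow_le_rpow ?_ (by positivity)).trans
      (ENNReal.rpow_add_le_add_rpow _ _ (by positivity) ((div_le_one hr0).2 hr))
    rw [← Finset.sum_filter_add_sum_filter_not Finset.univ fun i : Fin N =>
      R (u i.castSucc) (u i.succ)]
    refine add_le_add (sum_enorm_sub_rpow_le_card_mul hr0 hG hu huD fun i hi =>
      hR _ _ (Finset.mem_filter.1 hi).2) ?_
    refine (sum_enorm_sub_rpow_le_card_mul_of_enorm_le hr0.le (fun _ _ => hF _ (huD _))
      fun _ _ => hF _ (huD _)).trans ?_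
    gcongr
    exact hstep N u hu
  calc vnorm r D F
    _ ≤ n ^ (1 / r) * S + (n ^ (1 / r) * S + (b : ℝ≥0∞) ^ (1 / r) * (2 * S)) :=
      add_le_add hsup (iSup₂_le fun N u => iSup₂_le fun hu huD => hvar N u hu huD)
    _ = 2 * (n ^ (1 / r) + (b : ℝ≥0∞) ^ (1 / r)) * S := by ring

end Patching

end Variation

section Halves

variable {ω J : Set ℝ} {a b z : ℝ} {j k : ℤ}

lemma mem_lowerHalf_or_mem_upperHalf (hz : z ∈ ω) : z ∈ lowerHalf ω ∨ z ∈ upperHalf ω :=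
  (lt_or_ge z _).imp (⟨hz, ·⟩) (⟨hz, ·⟩)

lemma lt_of_mem_lowerHalf_of_mem_upperHalf (ha : a ∈ lowerHalf ω) (hb : b ∈ upperHalf ω) :
    a < b :=
  lt_of_lt_of_le ha.2 hb.2

lemma notMem_upperHalf_of_mem_lowerHalf (hz : z ∈ lowerHalf ω) : z ∉ upperHalf ω :=
  fun h => (lt_of_mem_lowerHalf_of_mem_upperHalf hz h).false

namespace IsDyadicLen

lemma volume_eq (hω : IsDyadicLen k ω) : volume ω = ENNReal.ofReal (2 ^ k) := by
  obtain ⟨n, rfl⟩ := hω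
  rw [Real.volume_Ico]
  congr 1
  ring

lemma ordConnected (hω : IsDyadicLen k ω) : ω.OrdConnected := by
  obtain ⟨n, rfl⟩ := hω
  exact ordConnected_Ico

lemma exists_isLeast (hω : IsDyadicLen k ω) : ∃ a, IsLeast ω a := by
  obtain ⟨n, rfl⟩ := hω
  exact ⟨_, isLeast_Ico (by gcongr; linarith)⟩

lemma subset_of_mem (hJ : IsDyadicLen j J) (hω : IsDyadicLen k ω) (hjk : j ≤ k)
    (hzJ : z ∈ J) (hzω : z ∈ ω) : J ⊆ ω := by
  obtain ⟨n, rfl⟩ := hJ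
  obtain ⟨m, rfl⟩ := hω
  obtain ⟨d, rfl⟩ := Int.le.dest hjk
  have hpow : (2 : ℝ) ^ (j + (d : ℤ)) = 2 ^ d * 2 ^ j := by
    rw [zpow_add₀ two_ne_zero, zpow_natCast, mul_comm]
  have hj : (0 : ℝ) < 2 ^ j := by positivity
  rw [hpow, ← mul_assoc, ← mul_assoc] at hzω ⊢
  have hleft : m * 2 ^ d < n + 1 := by
    exact_mod_cast lt_of_mul_lt_mul_right (hzω.1.trans_lt hzJ.2) hj.le
  have hright : n < (m + 1) * 2 ^ d := by
    exact_mod_cast lt_of_mul_lt_mul_right (hzJ.1.trans_lt hzω.2) hj.le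
  refine Ico_subset_Ico ?_ ?_ <;> refine mul_le_mul_of_nonneg_right ?_ hj.le
  · exact_mod_cast Int.lt_add_one_iff.1 hleft
  · exact_mod_cast hright

lemma exists_halves_eq (hω : IsDyadicLen k ω) : ∃ n : ℤ,
    lowerHalf ω = Ico (((2 * n : ℤ) : ℝ) * 2 ^ (k - 1)) ((((2 * n : ℤ) : ℝ) + 1) * 2 ^ (k - 1)) ∧
    upperHalf ω =
      Ico (((2 * n + 1 : ℤ) : ℝ) * 2 ^ (k - 1)) ((((2 * n + 1 : ℤ) : ℝ) + 1) * 2 ^ (k - 1)) := by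
  obtain ⟨n, rfl⟩ := hω
  have hk : (2 : ℝ) ^ k = 2 * 2 ^ (k - 1) := by
    rw [← zpow_one_add₀ two_ne_zero, add_sub_cancel]
  have hpos : (0 : ℝ) < 2 ^ k := by positivity
  have hmid : (sInf (Ico (n * (2 : ℝ) ^ k) ((n + 1) * 2 ^ k)) +
      sSup (Ico (n * (2 : ℝ) ^ k) ((n + 1) * 2 ^ k))) / 2 = n * 2 ^ k + 2 ^ (k - 1) := by
    rw [csInf_Ico (by linarith), csSup_Ico (by linarith), hk]
    ring
  refine ⟨n, ?_, ?_⟩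
  · rw [lowerHalf, hmid, Ico_inter_Iio, min_eq_right (by linarith), hk]
    push_cast
    congr 1 <;> ring
  · rw [upperHalf, hmid, Ico_inter_Ici, max_eq_right (by linarith), hk]
    push_cast
    congr 1 <;> ring

lemma isDyadicLen_lowerHalf (hω : IsDyadicLen k ω) : IsDyadicLen (k - 1) (lowerHalf ω) :=
  let ⟨n, h, _⟩ := hω.exists_halves_eq
  ⟨2 * n, h⟩

lemma isDyadicLen_upperHalf (hω : IsDyadicLen k ω) : IsDyadicLen (k - 1) (upperHalf ω) :=
  let ⟨n, _, h⟩ := hω.exists_halves_eq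
  ⟨2 * n + 1, h⟩

lemma subset_lowerHalf (hJ : IsDyadicLen j J) (hω : IsDyadicLen k ω) (hjk : j < k)
    (hzJ : z ∈ J) (hzω : z ∈ lowerHalf ω) : J ⊆ lowerHalf ω :=
  hJ.subset_of_mem hω.isDyadicLen_lowerHalf (Int.le_sub_one_of_lt hjk) hzJ hzω

lemma subset_upperHalf (hJ : IsDyadicLen j J) (hω : IsDyadicLen k ω) (hjk : j < k)
    (hzJ : z ∈ J) (hzω : z ∈ upperHalf ω) : J ⊆ upperHalf ω :=
  hJ.subset_of_mem hω.isDyadicLen_upperHalf (Int.le_sub_one_of_lt hjk) hzJ hzω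

lemma exists_half (hω : IsDyadicLen k ω) (hz : z ∈ ω) :
    ∃ J, IsDyadicLen (k - 1) J ∧ z ∈ J ∧ J ⊆ ω := by
  rcases mem_lowerHalf_or_mem_upperHalf hz with h | h
  · exact ⟨_, hω.isDyadicLen_lowerHalf, h, inter_subset_left⟩
  · exact ⟨_, hω.isDyadicLen_upperHalf, h, inter_subset_left⟩

lemma mem_upperHalf_congr (hJ : IsDyadicLen j J) (hω : IsDyadicLen k ω) (hjk : j < k)
    (hzJ : z ∈ J) (hzω : z ∈ ω) (ha : a ∈ J) (hb : b ∈ J) :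
    a ∈ upperHalf ω ↔ b ∈ upperHalf ω := by
  rcases mem_lowerHalf_or_mem_upperHalf hzω with h | h
  · have hsub := hJ.subset_lowerHalf hω hjk hzJ h
    exact iff_of_false (notMem_upperHalf_of_mem_lowerHalf (hsub ha))
      (notMem_upperHalf_of_mem_lowerHalf (hsub hb))
  · have hsub := hJ.subset_upperHalf hω hjk hzJ h
    exact iff_of_true (hsub ha) (hsub hb)

lemma notMem_upperHalf_of_isLeast (hω : IsDyadicLen k ω) (hsub : ω ⊆ J) (ha : IsLeast J a) :
    a ∉ upperHalf ω := by
  obtain ⟨z, hz, -⟩ := hω.isDyadicLen_lowerHalf.exists_isLeast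
  exact fun h => ((lt_of_mem_lowerHalf_of_mem_upperHalf hz h).trans_le (ha.2 (hsub hz.1))).false

end IsDyadicLen

end Halves

section Collapse

variable {α : Type*} {J : Set α} {a : α}

/-- The map collapsing a set `J` to the point `a` and fixing all other points. -/
def collapseTo (J : Set α) (a ξ : α) : α := if ξ ∈ J then a else ξ

lemma collapseTo_of_mem {ξ : α} (h : ξ ∈ J) : collapseTo J a ξ = a := if_pos h

lemma collapseTo_of_notMem {ξ : α} (h : ξ ∉ J) : collapseTo J a ξ = ξ := if_neg h

lemma mapsTo_collapseTo {D : Set α} (ha : a ∈ D) : MapsTo (collapseTo J a) D D := fun ξ hξ => by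
  by_cases h : ξ ∈ J
  · rwa [collapseTo_of_mem h]
  · rwa [collapseTo_of_notMem h]

lemma monotone_collapseTo [LinearOrder α] (hJ : J.OrdConnected) (ha : IsLeast J a) :
    Monotone (collapseTo J a) := by
  intro ξ η h
  unfold collapseTo
  split_ifs with hξ hη hη
  · rfl
  · exact (ha.2 hξ).trans h
  · by_contra! h'
    exact hξ (hJ.out ha.1 hη ⟨h'.le, h⟩)
  · exact h

variable {ω J : Set ℝ} {a z : ℝ} {j k : ℤ}

lemma IsDyadicLen.collapseTo_mem_upperHalf_iff (hJ : IsDyadicLen j J) (hω : IsDyadicLen k ω)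
    (hjk : j < k) (hzJ : z ∈ J) (hzω : z ∈ ω) (ha : a ∈ J) {ξ : ℝ} :
    collapseTo J a ξ ∈ upperHalf ω ↔ ξ ∈ upperHalf ω := by
  by_cases h : ξ ∈ J
  · rw [collapseTo_of_mem h]
    exact hJ.mem_upperHalf_congr hω hjk hzJ hzω ha h
  · rw [collapseTo_of_notMem h]

lemma IsDyadicLen.collapseTo_notMem_upperHalf (hω : IsDyadicLen k ω) (hsub : ω ⊆ J)
    (ha : IsLeast J a) {ξ : ℝ} : collapseTo J a ξ ∉ upperHalf ω := by
  by_cases h : ξ ∈ J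
  · rw [collapseTo_of_mem h]
    exact hω.notMem_upperHalf_of_isLeast hsub ha
  · rw [collapseTo_of_notMem h]
    exact fun hξ => h (hsub hξ.1)

end Collapse

namespace Bitile

variable {P Q : Bitile} {a p q x z : ℝ}

lemma exists_isDyadicLen (P : Bitile) : ∃ k : ℤ, IsDyadicLen k P.ω ∧ IsDyadicLen (1 - k) P.I := by
  obtain ⟨n, j, hI⟩ := P.hI
  obtain ⟨m, k, hω⟩ := P.hω
  have hI' : IsDyadicLen j P.I := ⟨n, hI⟩
  have hω' : IsDyadicLen k P.ω := ⟨m, hω⟩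
  have harea : ENNReal.ofReal (2 ^ (j + k)) = ENNReal.ofReal (2 ^ (1 : ℤ)) := by
    rw [zpow_add₀ two_ne_zero, ENNReal.ofReal_mul (by positivity), ← hI'.volume_eq,
      ← hω'.volume_eq, P.harea]
    simp
  have hpow : (2 : ℝ) ^ (j + k) = 2 ^ (1 : ℤ) :=
    (ENNReal.ofReal_eq_ofReal_iff (by positivity) (by positivity)).1 harea
  obtain rfl : j = 1 - k := eq_sub_of_add_eq (zpow_right_injective₀ two_pos (by norm_num) hpow)
  exact ⟨k, hω', hI'⟩

/-- The scale of a bitile: its frequency interval has length `2 ^ scale`, hence its time interval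
has length `2 ^ (1 - scale)`. -/
def scale (P : Bitile) : ℤ := P.exists_isDyadicLen.choose

lemma isDyadicLen_ω (P : Bitile) : IsDyadicLen P.scale P.ω :=
  P.exists_isDyadicLen.choose_spec.1

lemma isDyadicLen_I (P : Bitile) : IsDyadicLen (1 - P.scale) P.I :=
  P.exists_isDyadicLen.choose_spec.2

lemma ordConnected_upperHalf (P : Bitile) : (upperHalf P.ω).OrdConnected :=
  P.isDyadicLen_ω.isDyadicLen_upperHalf.ordConnected

lemma volume_I_le (h : P.scale ≤ Q.scale) : volume Q.I ≤ volume P.I := by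
  rw [P.isDyadicLen_I.volume_eq, Q.isDyadicLen_I.volume_eq]
  gcongr
  norm_num

lemma I_subset (hP : x ∈ P.I) (hQ : x ∈ Q.I) (h : P.scale ≤ Q.scale) : Q.I ⊆ P.I :=
  Q.isDyadicLen_I.subset_of_mem P.isDyadicLen_I (by omega) hQ hP

lemma eq_of_scale_eq (hxP : x ∈ P.I) (hxQ : x ∈ Q.I) (hzP : z ∈ P.ω) (hzQ : z ∈ Q.ω)
    (h : P.scale = Q.scale) : P = Q := by
  have hI : P.I = Q.I := (I_subset hxQ hxP h.ge).antisymm (I_subset hxP hxQ h.le)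
  have hω : P.ω = Q.ω :=
    (P.isDyadicLen_ω.subset_of_mem Q.isDyadicLen_ω h.le hzP hzQ).antisymm
      (Q.isDyadicLen_ω.subset_of_mem P.isDyadicLen_ω h.ge hzQ hzP)
  cases P
  cases Q
  congr

lemma upperHalf_subset (h : P.scale ≤ Q.scale) (hP : z ∈ upperHalf P.ω)
    (hQ : z ∈ upperHalf Q.ω) : upperHalf P.ω ⊆ upperHalf Q.ω :=
  P.isDyadicLen_ω.isDyadicLen_upperHalf.subset_of_mem Q.isDyadicLen_ω.isDyadicLen_upperHalf
    (by omega) hP hQ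

lemma upperHalf_subset_or_subset (hP : z ∈ upperHalf P.ω) (hQ : z ∈ upperHalf Q.ω) :
    upperHalf P.ω ⊆ upperHalf Q.ω ∨ upperHalf Q.ω ⊆ upperHalf P.ω :=
  (le_total P.scale Q.scale).imp (upperHalf_subset · hP hQ) (upperHalf_subset · hQ hP)

lemma lowerLT_of_le (hxP : x ∈ P.I) (hxQ : x ∈ Q.I) (haP : a ∈ lowerHalf P.ω)
    (haQ : a ∈ lowerHalf Q.ω) (hp : p ∈ upperHalf P.ω) (hq : q ∈ upperHalf Q.ω) (hpq : p ≤ q)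
    (hne : P ≠ Q) : lowerLT Q P := by
  have hscale : P.scale < Q.scale := by
    by_contra! h
    have hlt := h.lt_of_ne fun h => hne (eq_of_scale_eq hxP hxQ haP.1 haQ.1 h.symm)
    have hsub := Q.isDyadicLen_ω.subset_lowerHalf P.isDyadicLen_ω hlt haQ.1 haP
    exact (lt_of_mem_lowerHalf_of_mem_upperHalf (hsub hq.1) hp).not_ge hpq
  have hsub := P.isDyadicLen_ω.subset_lowerHalf Q.isDyadicLen_ω hscale haP.1 haQ
  refine ⟨⟨I_subset hxP hxQ hscale.le, inter_subset_left.trans hsub⟩, fun h => ?_⟩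
  exact notMem_upperHalf_of_mem_lowerHalf (h.2 (hsub hp.1)) hp

end Bitile

section UpperSum

variable {E : Type*} [NormedAddCommGroup E] {c : Bitile → E} {S S' : Set Bitile} {r ξ η : ℝ}

/-- The multiplier `∑ P ∈ S, c P • 1_{ω_{P_u}}`, with coefficients in a normed group. -/
def upperSum (c : Bitile → E) (S : Set Bitile) (ξ : ℝ) : E :=
  ∑ᶠ P ∈ S, (upperHalf P.ω).indicator (fun _ => c P) ξ

lemma upperSum_congr
    (h : ∀ P, P ∈ S ∧ ξ ∈ upperHalf P.ω ↔ P ∈ S' ∧ η ∈ upperHalf P.ω) :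
    upperSum c S ξ = upperSum c S' η :=
  finsum_congr fun P => by simp only [finsum_eq_if, indicator_apply, ← ite_and, h P]

lemma upperSum_eq_finsum_mul (c : Bitile → ℝ) (S : Set Bitile) :
    upperSum c S = fun ξ => ∑ᶠ P ∈ S, c P * (upperHalf P.ω).indicator (fun _ => 1) ξ := by
  ext ξ
  simp only [upperSum, indicator_apply, mul_ite, mul_one, mul_zero]

lemma upperSum_empty : upperSum c ∅ = 0 := by
  ext ξ
  simp [upperSum]

/-- The bitiles that survive are those whose frequency interval is at least that of the smallest
survivor `P₀`. If `J` is the half of `ω_{P₀}` containing `ζ`, survivors are constant on `J`, the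
others live in `J` and vanish at its left endpoint; so collapsing `J` to that endpoint composes
the sum with a monotone map that deletes exactly the others. -/
theorem vnorm_upperSum_trunc_le (hr : 0 < r) (hS : S.Finite) {ζ : ℝ} (hζ : ∀ P ∈ S, ζ ∈ P.ω)
    (V : ℝ≥0∞) :
    vnorm r (Ici 0) (upperSum c {P ∈ S | volume P.I < V}) ≤ vnorm r (Ici 0) (upperSum c S) := by
  rcases eq_empty_or_nonempty {P ∈ S | volume P.I < V} with h | hne
  · rw [h, upperSum_empty, vnorm_zero hr]
    exact zero_le
  obtain ⟨P₀, hP₀, hmin⟩ := exists_min_image _ Bitile.scale (hS.subset (sep_subset _ _)) hne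
  obtain ⟨J, hJ, hζJ, hJω⟩ := P₀.isDyadicLen_ω.exists_half (hζ P₀ hP₀.1)
  obtain ⟨a, ha⟩ := hJ.exists_isLeast
  have hsurvive (ξ : ℝ) (P : Bitile) : P ∈ {P ∈ S | volume P.I < V} ∧ ξ ∈ upperHalf P.ω ↔
      P ∈ S ∧ collapseTo J a ξ ∈ upperHalf P.ω := by
    rw [mem_sep_iff, and_assoc]
    refine and_congr_right fun hP => ?_
    by_cases hV : volume P.I < V
    · have hscale := hmin P ⟨hP, hV⟩
      rw [and_iff_right hV]
      exact (hJ.collapseTo_mem_upperHalf_iff P.isDyadicLen_ω (by omega) hζJ (hζ P hP) ha.1).symm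
    · have hscale : P.scale < P₀.scale := by
        by_contra! h
        exact hV ((Bitile.volume_I_le h).trans_lt hP₀.2)
      have hsub : P.ω ⊆ J := P.isDyadicLen_ω.subset_of_mem hJ (by omega) (hζ P hP) hζJ
      exact iff_of_false (fun h => hV h.1) (P.isDyadicLen_ω.collapseTo_notMem_upperHalf hsub ha)
  have hcomp : upperSum c {P ∈ S | volume P.I < V} = upperSum c S ∘ collapseTo J a :=
    funext fun ξ => upperSum_congr (hsurvive ξ)
  have hmaps : MapsTo (collapseTo J a) (Ici 0) (Ici 0) :=
    mapsTo_collapseTo (P₀.hωsub (hJω ha.1))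
  rw [hcomp]
  exact vnorm_comp_le hr ((monotone_collapseTo hJ.ordConnected ha).monotoneOn _) hmaps

end UpperSum

section Stacks

variable {Ts : Set WTree} {T : WTree} {P Q : Bitile} {V : ℝ≥0∞} {N : ℕ} {x ξ η : ℝ}

/-- The bitiles occurring in a collection of trees. -/
def bitiles (Ts : Set WTree) : Set Bitile := ⋃ T ∈ Ts, T.carrier

/-- The bitiles occurring in a collection of trees whose upper frequency half contains `ξ`; they
are those contributing to the value at `ξ` of the associated multiplier. -/
def active (Ts : Set WTree) (ξ : ℝ) : Set Bitile := {P ∈ bitiles Ts | ξ ∈ upperHalf P.ω}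

/-- Two frequencies share a tree when a single tree contains all bitiles active at either of
them. -/
def ShareTree (Ts : Set WTree) (ξ η : ℝ) : Prop :=
  ∃ T ∈ Ts, active Ts ξ ⊆ T.carrier ∧ active Ts η ⊆ T.carrier

/-- A stack of `u`-overlapping trees: no bitile of the collection below a bitile of a tree `T`
can be added to `T`. Over a common spatial point this is what maximality of the trees amounts to,
and unlike maximality it passes to truncations. -/
def IsUStack (Ts : Set WTree) : Prop :=
  ∀ T ∈ Ts, UOverlapping T ∧ ∀ P ∈ T.carrier, ∀ Q ∈ bitiles Ts, Q.I ⊆ P.I →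
    T.ξtop ∈ upperHalf Q.ω → Q ∈ T.carrier

/-- A stack of `l`-overlapping trees: the form that proper sorting takes for bitiles over a common
spatial point, where every nonempty tree competes with every bitile. -/
def IsLStack (Ts : Set WTree) : Prop :=
  ∀ T ∈ Ts, LOverlapping T ∧ LConvex T.carrier ∧
    ∀ T' ∈ Ts, T'.carrier.Nonempty → ∀ P ∈ T.carrier, T'.ξtop ∉ upperHalf P.ω

lemma mem_bitiles_iff : P ∈ bitiles Ts ↔ ∃ T ∈ Ts, P ∈ T.carrier := by
  simp only [bitiles, mem_iUnion, exists_prop]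

lemma mem_bitiles (hT : T ∈ Ts) (hP : P ∈ T.carrier) : P ∈ bitiles Ts :=
  mem_bitiles_iff.2 ⟨T, hT, hP⟩

/-- The tree obtained by keeping the bitiles `P` with `|I_P| < V`. -/
def WTree.trunc (V : ℝ≥0∞) (T : WTree) : WTree :=
  ⟨{P ∈ T.carrier | volume P.I < V}, T.ξtop, T.Itop⟩

lemma bitiles_image_trunc :
    bitiles (WTree.trunc V '' Ts) = {P ∈ bitiles Ts | volume P.I < V} := by
  ext P
  simp only [mem_bitiles_iff, exists_mem_image, WTree.trunc, ← and_assoc, exists_and_right,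
    mem_ofPred_eq]

lemma IsUStack.trunc (h : IsUStack Ts) : IsUStack (WTree.trunc V '' Ts) := by
  rintro _ ⟨T, hT, rfl⟩
  refine ⟨fun P hP => (h T hT).1 P hP.1, fun P hP Q hQ hQP hξ => ?_⟩
  rw [bitiles_image_trunc] at hQ
  exact ⟨(h T hT).2 P hP.1 Q hQ.1 hQP hξ, hQ.2⟩

lemma IsLStack.trunc (h : IsLStack Ts) : IsLStack (WTree.trunc V '' Ts) := by
  rintro _ ⟨T, hT, rfl⟩
  refine ⟨fun P hP => (h T hT).1 P hP.1, fun P P' P'' hP hP'' hlt hlt' => ?_, ?_⟩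
  · exact ⟨(h T hT).2.1 P P' P'' hP.1 hP''.1 hlt hlt', (measure_mono hlt'.1.1).trans_lt hP''.2⟩
  · rintro _ ⟨T', hT', rfl⟩ hne P hP
    exact (h T hT).2.2 T' hT' (hne.mono (sep_subset _ _)) P hP.1

/-- Maximality is tested against the tree obtained by adding a single bitile. -/
lemma isUStack_of_tdMaximal
    (h : ∀ T ∈ Ts, IsTree T ∧ UOverlapping T ∧
      TdMaximalAmong T {T' | IsTree T' ∧ UOverlapping T' ∧ T'.carrier ⊆ bitiles Ts}) :
    IsUStack Ts := by
  intro T hT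
  obtain ⟨⟨hItop, hξtop, hmem⟩, hover, ⟨-, -, hsub⟩, hmax⟩ := h T hT
  refine ⟨hover, fun P hP Q hQ hQP hξ => ?_⟩
  refine hmax ⟨insert Q T.carrier, T.ξtop, T.Itop⟩ ⟨⟨hItop, hξtop, ?_⟩, ?_, ?_⟩ rfl rfl
    (subset_insert _ _) (mem_insert _ _)
  · exact forall_mem_insert.2 ⟨⟨hQP.trans (hmem P hP).1, hξ.1⟩, hmem⟩
  · exact forall_mem_insert.2 ⟨hξ, hover⟩
  · exact insert_subset hQ hsub

lemma ProperlySorted.isLStack (h : ProperlySorted Ts) (hx : ∀ P ∈ bitiles Ts, x ∈ P.I) :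
    IsLStack Ts := by
  intro T hT
  refine ⟨(h.1 T hT).2.1, (h.1 T hT).2.2, fun T' hT' ⟨Q, hQ⟩ P hP => h.2.2 T hT P hP T' hT' ?_⟩
  exact ⟨x, ((h.1 T' hT').1.2.2 Q hQ).1 (hx Q (mem_bitiles hT' hQ)), hx P (mem_bitiles hT hP)⟩

lemma IsUStack.exists_active_subset (h : IsUStack Ts) (hne : Ts.Nonempty)
    (hfin : (bitiles Ts).Finite) (hx : ∀ P ∈ bitiles Ts, x ∈ P.I) (ξ : ℝ) :
    ∃ T ∈ Ts, active Ts ξ ⊆ T.carrier := by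
  rcases (active Ts ξ).eq_empty_or_nonempty with hempty | hactive
  · exact hne.imp fun T hT => ⟨hT, hempty ▸ empty_subset _⟩
  obtain ⟨P, hP, hmin⟩ :=
    exists_min_image _ Bitile.scale (hfin.subset (sep_subset _ _)) hactive
  obtain ⟨T, hT, hPT⟩ := mem_bitiles_iff.1 hP.1
  refine ⟨T, hT, fun Q hQ => (h T hT).2 P hPT Q hQ.1 ?_ ?_⟩
  · exact Bitile.I_subset (hx P hP.1) (hx Q hQ.1) (hmin Q hQ)
  · exact Bitile.upperHalf_subset (hmin Q hQ) hP.2 hQ.2 ((h T hT).1 P hPT)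

lemma IsLStack.subsingleton_active (h : IsLStack Ts) (hx : ∀ P ∈ bitiles Ts, x ∈ P.I) (ξ : ℝ) :
    (active Ts ξ).Subsingleton := by
  have hscale {P Q : Bitile} (hP : P ∈ active Ts ξ) (hQ : Q ∈ active Ts ξ) :
      Q.scale ≤ P.scale := by
    by_contra! hlt
    obtain ⟨T, hT, hPT⟩ := mem_bitiles_iff.1 hP.1
    obtain ⟨T', hT', hQT'⟩ := mem_bitiles_iff.1 hQ.1
    have hsub := P.isDyadicLen_ω.subset_upperHalf Q.isDyadicLen_ω hlt hP.2.1 hQ.2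
    exact (h T' hT').2.2 T hT ⟨P, hPT⟩ Q hQT' (hsub ((h T hT).1 P hPT).1)
  intro P hP Q hQ
  exact Bitile.eq_of_scale_eq (hx P hP.1) (hx Q hQ.1) hP.2.1 hQ.2.1
    ((hscale hQ hP).antisymm (hscale hP hQ))

lemma IsLStack.exists_active_subset (h : IsLStack Ts) (hne : Ts.Nonempty)
    (hx : ∀ P ∈ bitiles Ts, x ∈ P.I) (ξ : ℝ) : ∃ T ∈ Ts, active Ts ξ ⊆ T.carrier := by
  rcases (active Ts ξ).eq_empty_or_nonempty with hempty | ⟨P, hP⟩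
  · exact hne.imp fun T hT => ⟨hT, hempty ▸ empty_subset _⟩
  obtain ⟨T, hT, hPT⟩ := mem_bitiles_iff.1 hP.1
  exact ⟨T, hT, fun Q hQ => h.subsingleton_active hx ξ hP hQ ▸ hPT⟩

lemma exists_active_notMem_of_not_shareTree (hcov : ∀ ξ, ∃ T ∈ Ts, active Ts ξ ⊆ T.carrier)
    (h : ¬ ShareTree Ts ξ η) : ∃ P ∈ active Ts ξ, η ∉ upperHalf P.ω := by
  by_contra! hsub
  obtain ⟨T, hT, hη⟩ := hcov η
  exact h ⟨T, hT, fun P hP => hη ⟨hP.1, hsub P hP⟩, hη⟩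

lemma ShareTree.symm (h : ShareTree Ts ξ η) : ShareTree Ts η ξ :=
  let ⟨T, hT, hξ, hη⟩ := h
  ⟨T, hT, hη, hξ⟩

lemma card_le_ncard_of_relation {α τ : Type*} [LinearOrder α] {s : Finset α} {t : Set τ}
    (ht : t.Finite) {R : α → τ → Prop} (hex : ∀ i ∈ s, ∃ T ∈ t, R i T)
    (huniq : ∀ i ∈ s, ∀ j ∈ s, i < j → ∀ T ∈ t, R i T → ¬ R j T) : s.card ≤ t.ncard := by
  rw [ncard_eq_toFinset_card t ht]
  refine Finset.card_le_card_of_forall_subsingleton R (by simpa using hex) ?_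
  rintro T hT i ⟨hi, hiT⟩ j ⟨hj, hjT⟩
  have hTt := ht.mem_toFinset.1 hT
  rcases lt_trichotomy i j with hij | hij | hij
  · exact (huniq i hi j hj hij T hTt hiT hjT).elim
  · exact hij
  · exact (huniq j hj i hi hij T hTt hjT hiT).elim

lemma succ_le_castSucc_of_strictMono {u : Fin (N + 1) → ℝ} (hu : StrictMono u) {i j : Fin N}
    (hij : i < j) : u i.succ ≤ u j.castSucc :=
  hu.monotone (Fin.succ_le_castSucc_iff.2 hij)

/-- Suppose a step from `ξ` to `η` leaves `P` and enters `Q`, whose tree has top `s`. A bitile `P'`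
met later that shares a top `t` with `P` is large enough to contain the whole step, hence
also `Q`, and `t` is not the largest top it contains. -/
lemma mem_upperHalf_and_lt_of_step {P' : Bitile} {t s ξ' : ℝ} (hξη : ξ < η) (hηξ' : η ≤ ξ')
    (hξP : ξ ∈ upperHalf P.ω) (hηP : η ∉ upperHalf P.ω) (htP : t ∈ upperHalf P.ω)
    (hηQ : η ∈ upperHalf Q.ω) (hξQ : ξ ∉ upperHalf Q.ω) (hsQ : s ∈ upperHalf Q.ω)
    (hξP' : ξ' ∈ upperHalf P'.ω) (htP' : t ∈ upperHalf P'.ω) :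
    s ∈ upperHalf P'.ω ∧ t < s := by
  have hPP' : upperHalf P.ω ⊆ upperHalf P'.ω :=
    (Bitile.upperHalf_subset_or_subset htP htP').resolve_right fun hsub =>
      hηP (P.ordConnected_upperHalf.out hξP (hsub hξP') ⟨hξη.le, hηξ'⟩)
  have hηP' : η ∈ upperHalf P'.ω :=
    P'.ordConnected_upperHalf.out (hPP' hξP) hξP' ⟨hξη.le, hηξ'⟩
  have hQP' : upperHalf Q.ω ⊆ upperHalf P'.ω :=
    (Bitile.upperHalf_subset_or_subset hηQ hηP').resolve_right fun hsub => hξQ (hsub (hPP' hξP))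
  have htη : t < η := by
    by_contra! hηt
    exact hηP (P.ordConnected_upperHalf.out hξP htP ⟨hξη.le, hηt⟩)
  refine ⟨hQP' hsQ, ?_⟩
  by_contra! hst
  have htQ : t ∈ upperHalf Q.ω := Q.ordConnected_upperHalf.out hsQ hηQ ⟨hst, htη.le⟩
  rcases Bitile.upperHalf_subset_or_subset htP htQ with hsub | hsub
  · exact hξQ (hsub hξP)
  · exact hηP (hsub hηQ)

/-- Each step between frequencies sharing no tree leaves some `P`; it is charged to the tree with
the largest top frequency in the upper half of `P`. -/
lemma IsUStack.card_not_shareTree_le (h : IsUStack Ts) (hTs : Ts.Finite)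
    (hcov : ∀ ξ, ∃ T ∈ Ts, active Ts ξ ⊆ T.carrier) {u : Fin (N + 1) → ℝ} (hu : StrictMono u) :
    (Finset.univ.filter fun i : Fin N => ¬ ShareTree Ts (u i.castSucc) (u i.succ)).card
      ≤ Ts.ncard := by
  refine card_le_ncard_of_relation hTs (R := fun i T => ∃ P : Bitile,
    u i.castSucc ∈ upperHalf P.ω ∧ u i.succ ∉ upperHalf P.ω ∧ T.ξtop ∈ upperHalf P.ω ∧
      ∀ T' ∈ Ts, T'.ξtop ∈ upperHalf P.ω → T'.ξtop ≤ T.ξtop) ?_ ?_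
  · intro i hi
    obtain ⟨P, hP, hnot⟩ := exists_active_notMem_of_not_shareTree hcov (Finset.mem_filter.1 hi).2
    obtain ⟨T₀, hT₀, hPT₀⟩ := mem_bitiles_iff.1 hP.1
    obtain ⟨T, hT, hmax⟩ := exists_max_image {T ∈ Ts | T.ξtop ∈ upperHalf P.ω} WTree.ξtop
      (hTs.subset (sep_subset _ _)) ⟨T₀, hT₀, (h T₀ hT₀).1 P hPT₀⟩
    exact ⟨T, hT.1, P, hP.2, hnot, hT.2, fun T' hT' hξ => hmax T' ⟨hT', hξ⟩⟩
  · rintro i hi j - hij T - ⟨P, hξP, hηP, htP, -⟩ ⟨P', hξP', -, htP', hmax⟩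
    obtain ⟨Q, hQ, hξQ⟩ := exists_active_notMem_of_not_shareTree hcov
      (mt ShareTree.symm (Finset.mem_filter.1 hi).2)
    obtain ⟨S, hS, hQS⟩ := mem_bitiles_iff.1 hQ.1
    obtain ⟨hSP', hTS⟩ := mem_upperHalf_and_lt_of_step (hu Fin.castSucc_lt_succ)
      (succ_le_castSucc_of_strictMono hu hij) hξP hηP htP hQ.2 hξQ ((h S hS).1 Q hQS) hξP' htP'
    exact (hmax S hS hSP').not_gt hTS

lemma card_filter_crossing_le (hTs : Ts.Finite) {u : Fin (N + 1) → ℝ} (hu : StrictMono u) :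
    (Finset.univ.filter fun i : Fin N =>
      ∃ T ∈ Ts, T.carrier.Nonempty ∧ T.ξtop ∈ Ioc (u i.castSucc) (u i.succ)).card ≤ Ts.ncard := by
  refine card_le_ncard_of_relation hTs (R := fun i T => T.ξtop ∈ Ioc (u i.castSucc) (u i.succ))
    (fun i hi => ?_) fun i _ j _ hij T _ hi hj => ?_
  · obtain ⟨T, hT, -, h⟩ := (Finset.mem_filter.1 hi).2
    exact ⟨T, hT, h⟩
  · exact (hi.2.trans (succ_le_castSucc_of_strictMono hu hij)).not_gt hj.1

/-- The larger of the two tops lies in the lower halves of all three bitiles, so their lower tiles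
are ordered and `l`-convexity applies. -/
lemma IsLStack.mem_of_active_between (h : IsLStack Ts) (hx : ∀ P ∈ bitiles Ts, x ∈ P.I)
    {T T' : WTree} (hT : T ∈ Ts) (hT' : T' ∈ Ts) {P' : Bitile} {ξ' : ℝ} (hξη : ξ ≤ η)
    (hηξ' : η ≤ ξ') (hPT : P ∈ T.carrier) (hQT' : Q ∈ T'.carrier) (hPT' : P' ∈ T.carrier)
    (hξP : ξ ∈ upperHalf P.ω) (hηQ : η ∈ upperHalf Q.ω) (hξP' : ξ' ∈ upperHalf P'.ω)
    (htop : T.ξtop ≤ ξ) (htop' : T'.ξtop ≤ ξ) : Q ∈ T.carrier := by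
  obtain ⟨a, ha, haT, haT', haξ⟩ : ∃ a, (a = T.ξtop ∨ a = T'.ξtop) ∧ T.ξtop ≤ a ∧ T'.ξtop ≤ a ∧
      a ≤ ξ :=
    ⟨max T.ξtop T'.ξtop, max_choice _ _, le_max_left _ _, le_max_right _ _, max_le htop htop'⟩
  have hlower {R : Bitile} {S : WTree} {z : ℝ} (hS : S ∈ Ts) (hR : R ∈ S.carrier)
      (hSa : S.ξtop ≤ a) (hz : z ∈ upperHalf R.ω) (haz : a ≤ z) : a ∈ lowerHalf R.ω := by
    have haω : a ∈ R.ω :=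
      R.isDyadicLen_ω.ordConnected.out ((h S hS).1 R hR).1 hz.1 ⟨hSa, haz⟩
    refine (mem_lowerHalf_or_mem_upperHalf haω).resolve_right ?_
    rcases ha with rfl | rfl
    · exact (h S hS).2.2 T hT ⟨P, hPT⟩ R hR
    · exact (h S hS).2.2 T' hT' ⟨Q, hQT'⟩ R hR
  have haP := hlower hT hPT haT hξP haξ
  have haQ := hlower hT' hQT' haT' hηQ (haξ.trans hξη)
  have haP' := hlower hT hPT' haT hξP' (haξ.trans (hξη.trans hηξ'))
  have hxP := hx P (mem_bitiles hT hPT)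
  have hxQ := hx Q (mem_bitiles hT' hQT')
  have hxP' := hx P' (mem_bitiles hT hPT')
  by_cases hPQ : P = Q
  · exact hPQ ▸ hPT
  by_cases hQP' : Q = P'
  · exact hQP' ▸ hPT'
  exact (h T hT).2.1 P' Q P hPT' hPT
    (Bitile.lowerLT_of_le hxQ hxP' haQ haP' hηQ hξP' hηξ' hQP')
    (Bitile.lowerLT_of_le hxP hxQ haP haQ hξP hηQ hξη hPQ)

/-- A step between frequencies sharing no tree either crosses the top of a tree, which happens at
most once per tree, or leaves a tree for good. -/
lemma IsLStack.card_not_shareTree_le (h : IsLStack Ts) (hTs : Ts.Finite)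
    (hx : ∀ P ∈ bitiles Ts, x ∈ P.I) (hcov : ∀ ξ, ∃ T ∈ Ts, active Ts ξ ⊆ T.carrier)
    {u : Fin (N + 1) → ℝ} (hu : StrictMono u) :
    (Finset.univ.filter fun i : Fin N => ¬ ShareTree Ts (u i.castSucc) (u i.succ)).card
      ≤ 2 * Ts.ncard := by
  set bad := Finset.univ.filter fun i : Fin N => ¬ ShareTree Ts (u i.castSucc) (u i.succ)
  set crossing := Finset.univ.filter fun i : Fin N =>
    ∃ T ∈ Ts, T.carrier.Nonempty ∧ T.ξtop ∈ Ioc (u i.castSucc) (u i.succ)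
  have hleaving : (bad \ crossing).card ≤ Ts.ncard := by
    refine card_le_ncard_of_relation hTs
      (R := fun i T => ∃ P ∈ T.carrier, u i.castSucc ∈ upperHalf P.ω) (fun i hi => ?_) ?_
    · obtain ⟨hbad, -⟩ := Finset.mem_sdiff.1 hi
      obtain ⟨P, hP, -⟩ := exists_active_notMem_of_not_shareTree hcov (Finset.mem_filter.1 hbad).2
      obtain ⟨T, hT, hPT⟩ := mem_bitiles_iff.1 hP.1
      exact ⟨T, hT, P, hPT, hP.2⟩
    · rintro i hi j - hij T hT ⟨P, hPT, hξP⟩ ⟨P', hPT', hξP'⟩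
      obtain ⟨hbad, hcross⟩ := Finset.mem_sdiff.1 hi
      have hnot := (Finset.mem_filter.1 hbad).2
      obtain ⟨Q, hQ, -⟩ := exists_active_notMem_of_not_shareTree hcov (mt ShareTree.symm hnot)
      obtain ⟨T', hT', hQT'⟩ := mem_bitiles_iff.1 hQ.1
      have htop' : T'.ξtop ≤ u i.castSucc := by
        by_contra! hlt
        exact hcross <| Finset.mem_filter.2 ⟨Finset.mem_univ i, T', hT', ⟨Q, hQT'⟩, hlt,
          (lt_of_mem_lowerHalf_of_mem_upperHalf ((h T' hT').1 Q hQT') hQ.2).le⟩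
      have hQT : Q ∈ T.carrier := h.mem_of_active_between hx hT hT' (hu Fin.castSucc_lt_succ).le
        (succ_le_castSucc_of_strictMono hu hij) hPT hQT' hPT' hξP hQ.2 hξP'
        (lt_of_mem_lowerHalf_of_mem_upperHalf ((h T hT).1 P hPT) hξP).le htop'
      exact hnot ⟨T, hT,
        fun R hR => h.subsingleton_active hx _ ⟨mem_bitiles hT hPT, hξP⟩ hR ▸ hPT,
        fun R hR => h.subsingleton_active hx _ hQ hR ▸ hQT⟩
  calc bad.card
    _ ≤ (bad \ crossing).card + crossing.card := Finset.card_le_card_sdiff_add_card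
    _ ≤ Ts.ncard + Ts.ncard := add_le_add hleaving (card_filter_crossing_le hTs hu)
    _ = 2 * Ts.ncard := (two_mul _).symm

end Stacks

section StackInequality

variable {E : Type*} [NormedAddCommGroup E] {r x : ℝ} {Ts : Set WTree}

lemma upperSum_bitiles_eq {c : Bitile → E} {T : WTree} {ξ : ℝ} (hT : T ∈ Ts)
    (h : active Ts ξ ⊆ T.carrier) : upperSum c (bitiles Ts) ξ = upperSum c T.carrier ξ :=
  upperSum_congr fun _ => ⟨fun hP => ⟨h hP, hP.2⟩, fun hP => ⟨mem_bitiles hT hP.1, hP.2⟩⟩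

lemma bitiles_empty : bitiles ∅ = ∅ := by
  simp [bitiles]

lemma two_mul_rpow_add_le (hr : 1 ≤ r) (n : ℝ≥0∞) :
    2 * (n ^ (1 / r) + (2 * n) ^ (1 / r)) ≤ 6 * n ^ (1 / r) := by
  have htwo : (2 : ℝ≥0∞) ^ (1 / r) ≤ 2 :=
    (ENNReal.rpow_le_rpow_of_exponent_le one_le_two ((div_le_one (by linarith)).2 hr)).trans_eq
      (ENNReal.rpow_one 2)
  rw [ENNReal.mul_rpow_of_nonneg _ _ (by positivity)]
  calc 2 * (n ^ (1 / r) + 2 ^ (1 / r) * n ^ (1 / r))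
    _ ≤ 2 * (n ^ (1 / r) + 2 * n ^ (1 / r)) := by gcongr
    _ = 6 * n ^ (1 / r) := by ring

theorem vnorm_upperSum_bitiles_le (hr : 1 ≤ r) (hTs : Ts.Finite) (hfin : (bitiles Ts).Finite)
    (hx : ∀ P ∈ bitiles Ts, x ∈ P.I) (h : IsUStack Ts ∨ IsLStack Ts) (c : Bitile → E) (D : Set ℝ) :
    vnorm r D (upperSum c (bitiles Ts)) ≤
      6 * (Ts.ncard : ℝ≥0∞) ^ (1 / r) * ⨆ T ∈ Ts, vnorm r D (upperSum c T.carrier) := by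
  rcases Ts.eq_empty_or_nonempty with rfl | hne
  · rw [bitiles_empty, upperSum_empty, vnorm_zero (by linarith)]
    exact zero_le
  have hcov (ξ : ℝ) : ∃ T ∈ Ts, active Ts ξ ⊆ T.carrier :=
    h.elim (·.exists_active_subset hne hfin hx ξ) (·.exists_active_subset hne hx ξ)
  have hcount (N : ℕ) (u : Fin (N + 1) → ℝ) (hu : StrictMono u) :
      (Finset.univ.filter fun i : Fin N => ¬ ShareTree Ts (u i.castSucc) (u i.succ)).card
        ≤ 2 * Ts.ncard :=
    h.elim (fun h => (h.card_not_shareTree_le hTs hcov hu).trans (by omega))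
      (·.card_not_shareTree_le hTs hx hcov hu)
  have hpatch := vnorm_le_of_patches (Ts := hTs.toFinset) (b := 2 * Ts.ncard) (D := D)
    (F := upperSum c (bitiles Ts)) (G := fun T => upperSum c T.carrier) (R := ShareTree Ts)
    (S := ⨆ T ∈ Ts, vnorm r D (upperSum c T.carrier)) hr
    (fun T hT => le_iSup₂_of_le T (hTs.mem_toFinset.1 hT) le_rfl)
    (fun ξ _ => (hcov ξ).imp fun T hT => ⟨hTs.mem_toFinset.2 hT.1, upperSum_bitiles_eq hT.1 hT.2⟩)
    (fun ξ η ⟨T, hT, hξ, hη⟩ => ⟨T, hTs.mem_toFinset.2 hT, upperSum_bitiles_eq hT hξ,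
      upperSum_bitiles_eq hT hη⟩) hcount
  rw [← ncard_eq_toFinset_card Ts hTs, Nat.cast_mul, Nat.cast_two] at hpatch
  exact hpatch.trans (mul_le_mul_left (two_mul_rpow_add_le hr _) _)

theorem stack_trunc_variation_general (hr : 1 ≤ r) (hTs : Ts.Finite) (hfin : (bitiles Ts).Finite)
    (hx : ∀ P ∈ bitiles Ts, x ∈ P.I) (h : IsUStack Ts ∨ IsLStack Ts) (c : Bitile → E)
    (V : ℝ≥0∞) :
    vnorm r (Ici 0) (upperSum c {P ∈ bitiles Ts | volume P.I < V}) ≤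
      6 * (Ts.ncard : ℝ≥0∞) ^ (1 / r) * ⨆ T ∈ Ts, vnorm r (Ici 0) (upperSum c T.carrier) := by
  have htrunc : bitiles (WTree.trunc V '' Ts) ⊆ bitiles Ts :=
    bitiles_image_trunc.trans_subset (sep_subset _ _)
  have htree (T : WTree) (hT : T ∈ Ts) : ∃ ζ, ∀ P ∈ T.carrier, ζ ∈ P.ω :=
    h.elim (fun h => ⟨T.ξtop, fun P hP => ((h T hT).1 P hP).1⟩)
      fun h => ⟨T.ξtop, fun P hP => ((h T hT).1 P hP).1⟩
  calc vnorm r (Ici 0) (upperSum c {P ∈ bitiles Ts | volume P.I < V})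
    _ ≤ 6 * ((WTree.trunc V '' Ts).ncard : ℝ≥0∞) ^ (1 / r) *
        ⨆ T ∈ WTree.trunc V '' Ts, vnorm r (Ici 0) (upperSum c T.carrier) := by
      rw [← bitiles_image_trunc]
      exact vnorm_upperSum_bitiles_le hr (hTs.image _) (hfin.subset htrunc)
        (fun P hP => hx P (htrunc hP)) (h.imp IsUStack.trunc IsLStack.trunc) c _
    _ ≤ 6 * (Ts.ncard : ℝ≥0∞) ^ (1 / r) * ⨆ T ∈ Ts, vnorm r (Ici 0) (upperSum c T.carrier) := by
      have hcard : ((WTree.trunc V '' Ts).ncard : ℝ≥0∞) ≤ Ts.ncard :=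
        Nat.cast_le.2 (ncard_image_le hTs)
      rw [iSup_image]
      gcongr with T hT
      obtain ⟨ζ, hζ⟩ := htree T hT
      exact vnorm_upperSum_trunc_le (by linarith) (hfin.subset fun P hP => mem_bitiles hT hP) hζ V

end StackInequality

/-- Corollary 6.3: for a stack of trees as in Lemma 6.1 and any coefficients `c_P`,
`sup_k ‖Σ_{P ∈ Ps, |I_P| < 2^k} c_P 1_{ω_{P_u}}‖_{V^r_ξ}
  ≤ C |Ts|^{1/r} sup_{T ∈ Ts} ‖Σ_{P ∈ T} c_P 1_{ω_{P_u}}‖_{V^r}`. -/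
theorem stack_trunc_variation : ∃ C : ℝ, 0 < C ∧ ∀ r : ℝ, 1 ≤ r →
    ∀ x : ℝ, 0 ≤ x → ∀ Ps : Set Bitile, Ps.Finite → (∀ P ∈ Ps, x ∈ P.I) →
    ∀ Ts : Set WTree, Ts.Finite → Ps = (⋃ T ∈ Ts, T.carrier) →
    ((∀ T ∈ Ts, IsTree T ∧ UOverlapping T ∧
        TdMaximalAmong T {T' | IsTree T' ∧ UOverlapping T' ∧ T'.carrier ⊆ Ps}) ∨
      ProperlySorted Ts) →
    ∀ c : Bitile → ℝ,
      (⨆ k : ℤ, vnorm r (Set.Ici 0) fun ξ =>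
          ∑ᶠ (P : Bitile) (_ : P ∈ Ps ∧ volume P.I < 2 ^ k),
            c P * Set.indicator (upperHalf P.ω) (fun _ => (1 : ℝ)) ξ) ≤
        ENNReal.ofReal C * (Ts.ncard : ℝ≥0∞) ^ (1 / r) *
          ⨆ T ∈ Ts, vnorm r (Set.Ici 0) (fun ξ =>
            ∑ᶠ P ∈ T.carrier, c P * Set.indicator (upperHalf P.ω) (fun _ => (1 : ℝ)) ξ) := by
  refine ⟨6, by norm_num, fun r hr x _ Ps hPs hx Ts hTs hPsTs h c => iSup_le fun k => ?_⟩
  obtain rfl : Ps = bitiles Ts := hPsTs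
  have hstack : IsUStack Ts ∨ IsLStack Ts := h.imp isUStack_of_tdMaximal (·.isLStack hx)
  simpa only [upperSum_eq_finsum_mul, mem_ofPred_eq, ENNReal.ofReal_ofNat] using
    stack_trunc_variation_general hr hTs hPs hx hstack c (2 ^ k)

end
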